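/- (Classical solvability in 1D, Theorem 5) Let 0<α<1, T>0, and let the Sturm–Liouville eigendata (λ_i, X_i) on [0,l] satisfy the stated hypotheses. Let (c_i) be real numbers with ∑_{i=1}^∞ λ_i⁴ c_i² < ∞ and suppose u₀(x) = ∑_{i=1}^∞ c_i X_i(x) converges uniformly on [0,l]. Then the series u(x,t) = ∑_{i=1}^∞ c_i E_α(−λ_i t^α) X_i(x) converges uniformly on [0,l]×[0,T] to a continuous function u which satisfies: u(x,0) = u₀(x) for x ∈ [0,l]; u(0,t) = u(l,t) = 0 for t ∈ [0,T]; for each t ∈ (0,T) the function x ↦ u(x,t) is twice continuously differentiable on (0,l) with ∂²u/∂x² = ∑_i c_i E_α(−λ_i t^α) X_i''(x); for each x ∈ (0,l) the Caputo derivative D_t^α u(x,·) exists on (0,T) and equals −∑_i c_i λ_i E_α(−λ_i t^α) X_i(x); and u satisfies (D_t^α u)(x,t) = ∂/∂x(p(x) ∂u/∂x(x,t)) − q(x) u(x,t) for all x ∈ (0,l), t ∈ (0,T). -/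

import Mathlib

open MeasureTheory Set Filter

/-- The Caputo fractional derivative of order `α` of `f` at `t`:
`(D^α f)(t) = (1/Γ(1−α)) ∫₀ᵗ (t−s)^{−α} f'(s) ds`. -/
noncomputable def caputo (α : ℝ) (f : ℝ → ℝ) (t : ℝ) : ℝ :=
  (1 / Real.Gamma (1 - α)) * ∫ s in (0:ℝ)..t, (t - s) ^ (-α) * deriv f s

/-- The two-parameter Mittag-Leffler function `E_{α,β}(z) = ∑_{k≥0} z^k/Γ(αk+β)`;
`E_α = E_{α,1}`. -/
noncomputable def ml (α β z : ℝ) : ℝ := ∑' k : ℕ, z ^ k / Real.Gamma (α * k + β)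

/-- Sturm–Liouville eigendata on `[0,l]` for the operator `L(X) = −(pX')' + qX` with
Dirichlet boundary conditions: positive eigenvalues `λ_i → ∞`, eigenfunctions
`X_i ∈ C²([0,l])` vanishing at `0` and `l`, orthonormal in `L²(0,l)`, and the series
`∑ |X_i(x)|²/λ_i`, `∑ |X_i'(x)|²/λ_i²`, `∑ |X_i''(x)|²/λ_i³` converging uniformly
on `[0,l]`. -/
structure SturmLiouvilleData (l : ℝ) (p q : ℝ → ℝ) (lam : ℕ → ℝ) (X : ℕ → ℝ → ℝ) :
    Prop where
  hl : 0 < l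
  hp : ContDiffOn ℝ 1 p (Set.Icc 0 l)
  hppos : ∀ x ∈ Set.Icc (0:ℝ) l, 0 < p x
  hq : ContinuousOn q (Set.Icc 0 l)
  hqnn : ∀ x ∈ Set.Icc (0:ℝ) l, 0 ≤ q x
  hlam : ∀ i, 0 < lam i
  hlamtop : Filter.Tendsto lam Filter.atTop Filter.atTop
  hX : ∀ i, ContDiffOn ℝ 2 (X i) (Set.Icc 0 l)
  heig : ∀ i, ∀ x ∈ Set.Ioo (0:ℝ) l,
    -(deriv (fun y => p y * deriv (X i) y) x) + q x * X i x = lam i * X i x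
  hbc0 : ∀ i, X i 0 = 0
  hbcl : ∀ i, X i l = 0
  horth : ∀ i j, (∫ x in (0:ℝ)..l, X i x * X j x) = if i = j then 1 else 0
  hser1 : ∃ g : ℝ → ℝ, TendstoUniformlyOn
    (fun N x => ∑ i ∈ Finset.range N, (X i x) ^ 2 / lam i) g Filter.atTop (Set.Icc 0 l)
  hser2 : ∃ g : ℝ → ℝ, TendstoUniformlyOn
    (fun N x => ∑ i ∈ Finset.range N, (deriv (X i) x) ^ 2 / (lam i) ^ 2) g
    Filter.atTop (Set.Icc 0 l)
  hser3 : ∃ g : ℝ → ℝ, TendstoUniformlyOn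
    (fun N x => ∑ i ∈ Finset.range N, (deriv (deriv (X i)) x) ^ 2 / (lam i) ^ 3) g
    Filter.atTop (Set.Icc 0 l)

/-!
Each mode `c_i E_α(-λ_i t^α) X_i(x)` solves the equation, so everything rests on estimates that
allow the equation to be applied termwise.

In time, `t^(β-1) E_{α,β}(-λ t^α)` with `β > α` is, up to the factor `λ`, the fractional integral
of order `β - α` of the resolvent of the Volterra kernel `λ t^(α-1) / Γ(α)`. This kernel is
log-convex, which keeps its resolvent positive: a first zero would contradict the resolvent
equation. Hence `0 ≤ E_{α,β}(-λ t^α) ≤ 1 / Γ(β)` for `β ≥ α`, and the time derivative of a mode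
at time `s` is at most `λ_i |c_i X_i(x)| s^(α-1) / Γ(α)`, which is integrable against
`(t-s)^(-α)`; dominated convergence then gives the Caputo derivative termwise.

In space, `|c_i Y_i| ≤ w_i c_i² + Y_i² / w_i` with `w_i = λ_i, λ_i², λ_i³` and
`Y_i = X_i, X_i', X_i''` reduces the uniform convergence of the differentiated series to that of
the given eigenfunction series and to the decay of the coefficients.
-/

open scoped Topology

section MittagLeffler

variable {α β : ℝ}

lemma rpow_mul_natCast_add_sub_one {s : ℝ} (hs : 0 < s) (α β : ℝ) (k : ℕ) :
    s ^ (α * k + β - 1) = (s ^ α) ^ k * s ^ (β - 1) := by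
  rw [← Real.rpow_natCast, ← Real.rpow_mul hs.le, ← Real.rpow_add hs, add_sub_assoc]

lemma rpow_mul_exp_neg_le_Gamma {R x : ℝ} (hR : 0 < R) (hx : 1 ≤ x) :
    R ^ (x - 1) * Real.exp (-R) ≤ Real.Gamma x := by
  have hint := Real.GammaIntegral_convergent (one_pos.trans_le hx)
  have hsub : Ioi R ⊆ Ioi (0 : ℝ) := Ioi_subset_Ioi hR.le
  rw [Real.Gamma_eq_integral (one_pos.trans_le hx), ← integral_exp_neg_Ioi R,
    ← integral_const_mul]
  calc ∫ t in Ioi R, R ^ (x - 1) * Real.exp (-t)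
      ≤ ∫ t in Ioi R, Real.exp (-t) * t ^ (x - 1) := by
        refine setIntegral_mono_on ((integrableOn_exp_neg_Ioi R).const_mul _)
          (hint.mono_set hsub) measurableSet_Ioi fun t ht => ?_
        rw [mul_comm]
        gcongr
        exact le_of_lt ht
    _ ≤ ∫ t in Ioi 0, Real.exp (-t) * t ^ (x - 1) := by
        refine setIntegral_mono_set hint ?_ hsub.eventuallyLE
        filter_upwards [ae_restrict_mem measurableSet_Ioi] with t ht
        exact mul_nonneg (Real.exp_pos _).le (Real.rpow_nonneg (le_of_lt ht) _)

lemma Gamma_mul_natCast_add_pos (hα : 0 < α) (hβ : 0 < β) (k : ℕ) :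
    0 < Real.Gamma (α * k + β) :=
  Real.Gamma_pos_of_pos (by positivity)

lemma summable_ml (hα : 0 < α) (hβ : 0 < β) (z : ℝ) :
    Summable fun k : ℕ => z ^ k / Real.Gamma (α * k + β) := by
  obtain ⟨R, hR, hRα⟩ : ∃ R : ℝ, 0 < R ∧ R ^ α = 2 * (|z| + 1) :=
    ⟨(2 * (|z| + 1)) ^ α⁻¹, by positivity, Real.rpow_inv_rpow (by positivity) hα.ne'⟩
  have hgeom : Summable fun k : ℕ => R ^ (1 - β) * Real.exp R * (1 / 2 : ℝ) ^ k :=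
    summable_geometric_two.mul_left _
  refine hgeom.of_norm_bounded_eventually_nat ?_
  have hlarge : ∀ᶠ k : ℕ in atTop, 1 ≤ α * k + β :=
    ((tendsto_natCast_atTop_atTop.const_mul_atTop hα).atTop_add
      tendsto_const_nhds).eventually_ge_atTop 1
  filter_upwards [hlarge] with k hk
  have hΓ := Gamma_mul_natCast_add_pos hα hβ k
  have hcancel : R ^ (1 - β) * R ^ (β - 1) = 1 := by
    rw [← Real.rpow_add hR, sub_add_sub_cancel, sub_self, Real.rpow_zero]
  rw [norm_div, norm_pow, Real.norm_of_nonneg hΓ.le, Real.norm_eq_abs, div_le_iff₀ hΓ]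
  calc |z| ^ k ≤ (|z| + 1) ^ k := by gcongr; linarith
    _ = (1 / 2) ^ k * (R ^ α) ^ k := by rw [← mul_pow, hRα]; congr 1; ring
    _ = R ^ (1 - β) * Real.exp R * (1 / 2) ^ k * (R ^ (α * k + β - 1) * Real.exp (-R)) := by
        rw [rpow_mul_natCast_add_sub_one hR, Real.exp_neg]
        field_simp
        exact hcancel.symm
    _ ≤ R ^ (1 - β) * Real.exp R * (1 / 2) ^ k * Real.Gamma (α * k + β) := by
        gcongr
        exact rpow_mul_exp_neg_le_Gamma hR hk

lemma hasDerivAt_ml (hα : 0 < α) (hβ : 0 < β) (z : ℝ) :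
    HasDerivAt (ml α β) (∑' k : ℕ, k * z ^ (k - 1) / Real.Gamma (α * k + β)) z := by
  have hz : z ∈ Metric.ball (0 : ℝ) (|z| + 1) := by simp
  refine hasDerivAt_tsum_of_isPreconnected (summable_ml hα hβ (2 * (|z| + 1)))
    Metric.isOpen_ball (convex_ball _ _).isPreconnected
    (fun k y _ => (hasDerivAt_pow k y).div_const _) (fun k y hy => ?_) hz
    (summable_ml hα hβ z) hz
  have hΓ := Gamma_mul_natCast_add_pos hα hβ k
  have hk : (k : ℝ) ≤ 2 ^ k := mod_cast Nat.lt_two_pow_self.le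
  have hy' : |y| ≤ |z| + 1 := (mem_ball_zero_iff.1 hy).le
  rw [norm_div, norm_mul, norm_pow, Real.norm_of_nonneg hΓ.le, Real.norm_eq_abs y,
    Real.norm_of_nonneg k.cast_nonneg, mul_pow]
  gcongr
  calc |y| ^ (k - 1) ≤ (|z| + 1) ^ (k - 1) := by gcongr
    _ ≤ (|z| + 1) ^ k := pow_le_pow_right₀ (by linarith [abs_nonneg z]) (k.sub_le 1)

lemma continuous_ml (hα : 0 < α) (hβ : 0 < β) : Continuous (ml α β) :=
  continuous_iff_continuousAt.2 fun z => (hasDerivAt_ml hα hβ z).continuousAt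

lemma ml_zero (α β : ℝ) : ml α β 0 = 1 / Real.Gamma β := by
  rw [ml, tsum_eq_single 0 fun k hk => by simp [hk]]
  simp

lemma hasDerivAt_ml_one (hα : 0 < α) (z : ℝ) : HasDerivAt (ml α 1) (ml α α z / α) z := by
  have hshift (k : ℕ) : ((k + 1 : ℕ) : ℝ) * z ^ (k + 1 - 1) / Real.Gamma (α * (k + 1 : ℕ) + 1)
      = z ^ k / Real.Gamma (α * k + α) / α := by
    rw [Real.Gamma_add_one (by positivity), Nat.cast_succ, mul_add_one, Nat.add_sub_cancel]
    field_simp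
  refine (hasDerivAt_ml hα one_pos z).congr_deriv ?_
  rw [tsum_eq_zero_add' (by simpa only [hshift] using (summable_ml hα hα z).div_const α)]
  simp only [hshift, tsum_div_const, Nat.cast_zero, zero_mul, zero_div, zero_add, ml]

lemma ml_eq_one_div_Gamma_add (hα : 0 < α) (hβ : 0 < β) (z : ℝ) :
    ml α β z = 1 / Real.Gamma β + z * ml α (α + β) z := by
  have hshift (k : ℕ) : z ^ (k + 1) / Real.Gamma (α * (k + 1 : ℕ) + β)
      = z * (z ^ k / Real.Gamma (α * k + (α + β))) := by
    rw [Nat.cast_succ, mul_add_one, add_assoc, pow_succ', mul_div_assoc]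
  rw [ml, (summable_ml hα hβ z).tsum_eq_zero_add]
  simp only [hshift, tsum_mul_left, pow_zero, Nat.cast_zero, mul_zero, zero_add, ml]

end MittagLeffler

section FractionalIntegral

variable {α β γ t : ℝ}

lemma integral_sub_rpow_mul_rpow (hβ : 0 < β) (hγ : 0 < γ) (ht : 0 < t) :
    ∫ s in (0 : ℝ)..t, (t - s) ^ (γ - 1) * s ^ (β - 1)
      = Real.Gamma γ * Real.Gamma β / Real.Gamma (β + γ) * t ^ (β + γ - 1) := by
  have hcomplex : ((∫ s in (0 : ℝ)..t, (t - s) ^ (γ - 1) * s ^ (β - 1) : ℝ) : ℂ)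
      = ∫ s in (0 : ℝ)..t, (s : ℂ) ^ ((β : ℂ) - 1) * ((t : ℂ) - s) ^ ((γ : ℂ) - 1) := by
    rw [← intervalIntegral.integral_ofReal]
    refine intervalIntegral.integral_congr fun s hs => ?_
    rw [uIcc_of_le ht.le] at hs
    simp only [Complex.ofReal_mul, Complex.ofReal_cpow hs.1,
      Complex.ofReal_cpow (sub_nonneg.2 hs.2), Complex.ofReal_sub, Complex.ofReal_one, mul_comm]
  apply Complex.ofReal_injective
  rw [hcomplex, Complex.betaIntegral_scaled _ _ ht,
    Complex.betaIntegral_eq_Gamma_mul_div _ _ (by simpa) (by simpa)]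
  simp only [Complex.ofReal_mul, Complex.ofReal_div, Complex.ofReal_cpow ht.le,
    ← Complex.Gamma_ofReal, Complex.ofReal_add, Complex.ofReal_sub, Complex.ofReal_one]
  ring

lemma intervalIntegrable_sub_rpow_mul_rpow (hβ : 0 < β) (hγ : 0 < γ) (ht : 0 < t) :
    IntervalIntegrable (fun s : ℝ => (t - s) ^ (γ - 1) * s ^ (β - 1)) volume 0 t := by
  -- The integral of a non-integrable function is `0`, whereas the Beta integral is positive.
  refine intervalIntegral.intervalIntegrable_of_integral_ne_zero ?_
  rw [integral_sub_rpow_mul_rpow hβ hγ ht]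
  have := Real.Gamma_pos_of_pos hβ
  have := Real.Gamma_pos_of_pos hγ
  have := Real.Gamma_pos_of_pos (add_pos hβ hγ)
  positivity

/-- The Mittag-Leffler kernel `t ↦ t^(β-1) E_{α,β}(z t^α)`. Fractional integration raises `β`, and
for `β = α` it is, up to the factor `z`, the derivative of `t ↦ E_α(z t^α)`. It is meant for
`t > 0`. -/
noncomputable def mlKernel (α β z t : ℝ) : ℝ := t ^ (β - 1) * ml α β (z * t ^ α)

lemma continuous_ml_mul_rpow (hα : 0 < α) (hβ : 0 < β) (z : ℝ) :
    Continuous fun t : ℝ => ml α β (z * t ^ α) :=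
  (continuous_ml hα hβ).comp (continuous_const.mul (Real.continuous_rpow_const hα.le))

lemma continuousOn_mlKernel (hα : 0 < α) (hβ : 0 < β) (z : ℝ) :
    ContinuousOn (mlKernel α β z) (Ioi 0) :=
  (continuousOn_id.rpow_const fun _ ht => Or.inl (ne_of_gt ht)).mul
    (continuous_ml_mul_rpow hα hβ z).continuousOn

lemma hasSum_mlKernel (hα : 0 < α) (hβ : 0 < β) (z : ℝ) (ht : 0 < t) :
    HasSum (fun k : ℕ => z ^ k / Real.Gamma (α * k + β) * t ^ (α * k + β - 1))
      (mlKernel α β z t) := by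
  refine ((summable_ml hα hβ (z * t ^ α)).hasSum.mul_left (t ^ (β - 1))).congr_fun fun k => ?_
  rw [rpow_mul_natCast_add_sub_one ht, mul_pow]
  ring

lemma intervalIntegrable_sub_rpow_mul_mlKernel (hα : 0 < α) (hβ : 0 < β) (hγ : 0 < γ) (z : ℝ)
    (ht : 0 < t) :
    IntervalIntegrable (fun s => (t - s) ^ (γ - 1) * mlKernel α β z s) volume 0 t := by
  simp only [mlKernel, ← mul_assoc]
  exact (intervalIntegrable_sub_rpow_mul_rpow hβ hγ ht).mul_continuousOn
    (continuous_ml_mul_rpow hα hβ z).continuousOn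

lemma integral_sub_rpow_mul_mlKernel (hα : 0 < α) (hβ : 0 < β) (hγ : 0 < γ) (z : ℝ)
    (ht : 0 < t) :
    ∫ s in (0 : ℝ)..t, (t - s) ^ (γ - 1) * mlKernel α β z s
      = Real.Gamma γ * mlKernel α (β + γ) z t := by
  let F (w : ℝ) (k : ℕ) (s : ℝ) : ℝ :=
    (t - s) ^ (γ - 1) * (w ^ k / Real.Gamma (α * k + β) * s ^ (α * k + β - 1))
  have hF_eq (w : ℝ) (k : ℕ) : F w k = fun s =>
      w ^ k / Real.Gamma (α * k + β) * ((t - s) ^ (γ - 1) * s ^ (α * k + β - 1)) :=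
    funext fun s => mul_left_comm _ _ _
  have hF_int (w : ℝ) (k : ℕ) : IntegrableOn (F w k) (Ioc 0 t) := by
    rw [← intervalIntegrable_iff_integrableOn_Ioc_of_le ht.le, hF_eq]
    exact (intervalIntegrable_sub_rpow_mul_rpow (by positivity) hγ ht).const_mul _
  have hF_integral (w : ℝ) (k : ℕ) : ∫ s in Ioc 0 t, F w k s = Real.Gamma γ *
      (w ^ k / Real.Gamma (α * k + (β + γ)) * t ^ (α * k + (β + γ) - 1)) := by
    rw [← intervalIntegral.integral_of_le ht.le, hF_eq, intervalIntegral.integral_const_mul,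
      integral_sub_rpow_mul_rpow (by positivity) hγ ht, add_assoc]
    field_simp
  have hF_norm (k : ℕ) : ∫ s in Ioc 0 t, ‖F z k s‖ = ∫ s in Ioc 0 t, F |z| k s := by
    have hΓ := Gamma_mul_natCast_add_pos hα hβ k
    refine setIntegral_congr_fun measurableSet_Ioc fun s hs => ?_
    simp only [F, norm_mul, norm_div, norm_pow, Real.norm_eq_abs z, Real.norm_of_nonneg hΓ.le,
      Real.norm_of_nonneg (Real.rpow_nonneg (sub_nonneg.2 hs.2) _),
      Real.norm_of_nonneg (Real.rpow_nonneg hs.1.le _)]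
  have hF_summable : Summable fun k => ∫ s in Ioc 0 t, ‖F z k s‖ := by
    simp only [hF_norm, hF_integral]
    exact (hasSum_mlKernel hα (add_pos hβ hγ) |z| ht).summable.mul_left _
  have hF_tsum : ∀ s ∈ Ioc 0 t, ∑' k, F z k s = (t - s) ^ (γ - 1) * mlKernel α β z s :=
    fun s hs => ((hasSum_mlKernel hα hβ z hs.1).mul_left _).tsum_eq
  have hsum := hasSum_integral_of_summable_integral_norm (fun k => hF_int z k) hF_summable
  simp only [hF_integral, setIntegral_congr_fun measurableSet_Ioc hF_tsum] at hsum
  rw [intervalIntegral.integral_of_le ht.le]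
  exact hsum.unique ((hasSum_mlKernel hα (add_pos hβ hγ) z ht).mul_left _)

lemma hasDerivAt_ml_one_mul_rpow (hα : 0 < α) (z : ℝ) (ht : 0 < t) :
    HasDerivAt (fun t => ml α 1 (z * t ^ α)) (z * mlKernel α α z t) t := by
  have hinner : HasDerivAt (fun t : ℝ => z * t ^ α) (z * (α * t ^ (α - 1))) t :=
    (Real.hasDerivAt_rpow_const (Or.inl ht.ne')).const_mul z
  refine ((hasDerivAt_ml_one hα (z * t ^ α)).comp t hinner).congr_deriv ?_
  rw [mlKernel]
  field_simp

end FractionalIntegral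

section Volterra

variable {a v : ℝ → ℝ} {r t : ℝ}

/-- Positive convolution kernels on `(0, ∞)`, integrable at `0`, whose ratios `a (x + h) / a x` are
nondecreasing in `x`, i.e. whose logarithm is convex; the ratios are compared without division. -/
structure IsLogConvexKernel (a : ℝ → ℝ) : Prop where
  pos : ∀ {t}, 0 < t → 0 < a t
  continuousOn : ContinuousOn a (Ioi 0)
  intervalIntegrable : ∀ {t}, 0 < t → IntervalIntegrable a volume 0 t
  mul_le_mul : ∀ {x y h}, 0 < x → x ≤ y → 0 < h → a (x + h) * a y ≤ a (y + h) * a x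

/-- `v` is a resolvent of the convolution kernel `a`: it solves the Volterra equation
`v + a ∗ v = a` on `(0, ∞)`. Integrability is required because the integral of a non-integrable
function is `0`. -/
structure IsResolvent (a v : ℝ → ℝ) : Prop where
  intervalIntegrable : ∀ {t}, 0 < t → IntervalIntegrable (fun s => a (t - s) * v s) volume 0 t
  add_integral_eq : ∀ {t}, 0 < t → v t + ∫ s in (0 : ℝ)..t, a (t - s) * v s = a t

lemma exists_first_nonpos (hv : ContinuousOn v (Ioi 0)) (hv₀ : ∀ᶠ s in 𝓝[>] 0, 0 < v s)
    (ht : 0 < t) (hvt : v t ≤ 0) : ∃ r > 0, v r ≤ 0 ∧ ∀ s ∈ Ioo 0 r, 0 < v s := by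
  obtain ⟨δ, hδ : 0 < δ, hpos⟩ := mem_nhdsGT_iff_exists_Ioo_subset.1 hv₀
  have hclosed : IsClosed (Icc (min δ t) t ∩ v ⁻¹' Iic 0) :=
    (hv.mono fun s hs => (lt_min hδ ht).trans_le hs.1).preimage_isClosed_of_isClosed
      isClosed_Icc isClosed_Iic
  obtain ⟨r, ⟨hr, hvr⟩, hleast⟩ := (isCompact_Icc.of_isClosed_subset hclosed
    inter_subset_left).exists_isLeast ⟨t, right_mem_Icc.2 (min_le_right _ _), hvt⟩
  refine ⟨r, (lt_min hδ ht).trans_le hr.1, hvr, fun s hs => ?_⟩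
  rcases lt_or_ge s (min δ t) with hsδ | hδs
  · exact hpos ⟨hs.1, hsδ.trans_le (min_le_left _ _)⟩
  · by_contra! hvs
    exact hs.2.not_ge (hleast ⟨⟨hδs, hs.2.le.trans hr.2⟩, hvs⟩)

namespace IsResolvent

lemma intervalIntegrable_of_mem (hv : IsResolvent a v) (hr : 0 < r) (hrt : r ≤ t) :
    IntervalIntegrable (fun s => a (t - s) * v s) volume 0 r ∧
      IntervalIntegrable (fun s => a (t - s) * v s) volume r t := by
  have hint := hv.intervalIntegrable (hr.trans_le hrt)
  have hmem : r ∈ uIcc 0 t := by simp [mem_uIcc, hr.le, hrt]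
  exact ⟨hint.mono_set (uIcc_subset_uIcc_left hmem), hint.mono_set (uIcc_subset_uIcc_right hmem)⟩

lemma mul_integral_le (ha : IsLogConvexKernel a) (hv : IsResolvent a v) (hr : 0 < r) (hrt : r < t)
    (hv_nonneg : ∀ s ∈ Ioo 0 r, 0 ≤ v s) :
    a r * ∫ s in (0 : ℝ)..r, a (t - s) * v s ≤ a t * (a r - v r) := by
  have hshift : ∀ s ∈ Ioo 0 r, a r * (a (t - s) * v s) ≤ a t * (a (r - s) * v s) := fun s hs => by
    have hle : a (t - s) * a r ≤ a t * a (r - s) := by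
      simpa using ha.mul_le_mul (sub_pos.2 hs.2) (sub_le_self r hs.1.le) (sub_pos.2 hrt)
    linarith [mul_le_mul_of_nonneg_right hle (hv_nonneg s hs)]
  calc a r * ∫ s in (0 : ℝ)..r, a (t - s) * v s
      ≤ a t * ∫ s in (0 : ℝ)..r, a (r - s) * v s := by
        rw [← intervalIntegral.integral_const_mul, ← intervalIntegral.integral_const_mul]
        exact intervalIntegral.integral_mono_on_of_le_Ioo hr.le
          ((hv.intervalIntegrable_of_mem hr hrt.le).1.const_mul _)
          ((hv.intervalIntegrable hr).const_mul _) hshift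
    _ = a t * (a r - v r) := by rw [← hv.add_integral_eq hr, add_sub_cancel_left]

lemma integral_le_mul_integral (ha : IsLogConvexKernel a) (hv : IsResolvent a v) (hr : 0 < r)
    (hrt : r < t) (hv_le : ∀ s ∈ Icc r t, v s ≤ v r) :
    ∫ s in r..t, a (t - s) * v s ≤ v r * ∫ s in (0 : ℝ)..t - r, a s := by
  have hint : IntervalIntegrable (fun s => a (t - s)) volume r t := by
    simpa using ((ha.intervalIntegrable (sub_pos.2 hrt)).comp_sub_left t).symm
  calc ∫ s in r..t, a (t - s) * v s ≤ ∫ s in r..t, a (t - s) * v r :=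
        intervalIntegral.integral_mono_on_of_le_Ioo hrt.le
          (hv.intervalIntegrable_of_mem hr hrt.le).2 (hint.mul_const _) fun s hs =>
            mul_le_mul_of_nonneg_left (hv_le s (Ioo_subset_Icc_self hs))
              (ha.pos (sub_pos.2 hs.2)).le
    _ = v r * ∫ s in (0 : ℝ)..t - r, a s := by
        rw [intervalIntegral.integral_mul_const, intervalIntegral.integral_comp_sub_left, sub_self,
          mul_comm]

lemma mul_le_mul_add (ha : IsLogConvexKernel a) (hv : IsResolvent a v) (hr : 0 < r) (hrt : r < t)
    (hv_nonneg : ∀ s ∈ Ioo 0 r, 0 ≤ v s) (hv_le : ∀ s ∈ Icc r t, v s ≤ v r) :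
    a t * v r ≤ a r * (v t + v r * ∫ s in (0 : ℝ)..t - r, a s) := by
  have hpast := hv.mul_integral_le ha hr hrt hv_nonneg
  have hrecent := mul_le_mul_of_nonneg_left (hv.integral_le_mul_integral ha hr hrt hv_le)
    (ha.pos hr).le
  obtain ⟨h₁, h₂⟩ := hv.intervalIntegrable_of_mem hr hrt.le
  have heq := hv.add_integral_eq (hr.trans hrt)
  rw [← intervalIntegral.integral_add_adjacent_intervals h₁ h₂] at heq
  linear_combination hpast + hrecent - a r * heq

end IsResolvent

lemma IsLogConvexKernel.eventually_mul_integral_lt (ha : IsLogConvexKernel a) (ht : 0 < t) :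
    ∀ᶠ r in 𝓝[<] t, a r * ∫ s in (0 : ℝ)..t - r, a s < a t := by
  have hcont : ContinuousOn (fun r => a r * ∫ s in (0 : ℝ)..t - r, a s) (Ioc 0 t) := by
    refine (ha.continuousOn.mono fun r hr => hr.1).mul ?_
    refine (intervalIntegral.continuousOn_primitive_interval' (ha.intervalIntegrable ht)
      left_mem_uIcc).comp (continuous_const.sub continuous_id).continuousOn fun r hr => ?_
    rw [uIcc_of_le ht.le]
    exact ⟨sub_nonneg.2 hr.2, sub_le_self t hr.1.le⟩
  have hlim := (hcont t ⟨ht, le_rfl⟩).mono Ioo_subset_Ioc_self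
  rw [ContinuousWithinAt, nhdsWithin_Ioo_eq_nhdsLT ht, sub_self, intervalIntegral.integral_same,
    mul_zero] at hlim
  exact hlim.eventually_lt_const (ha.pos ht)

/- At a first zero `t` of `v`, let `r < t` maximise `v` over a short interval `[r₀, t]`. Comparing
the Volterra equation at `t` and at `r`, log-convexity gives `a t ≤ a r * ∫₀^(t-r) a`, which fails
when `r` is close to `t`. -/
theorem IsResolvent.pos (ha : IsLogConvexKernel a) (hv : IsResolvent a v)
    (hcont : ContinuousOn v (Ioi 0)) (hv₀ : ∀ᶠ s in 𝓝[>] 0, 0 < v s) (ht : 0 < t) : 0 < v t := by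
  by_contra! hvt
  obtain ⟨t₁, ht₁, hvt₁, hpos⟩ := exists_first_nonpos hcont hv₀ ht hvt
  obtain ⟨r₀, hr₀, hsmall⟩ := mem_nhdsLT_iff_exists_Ico_subset.1
    ((ha.eventually_mul_integral_lt ht₁).and (Ioo_mem_nhdsLT ht₁))
  have hr₀_pos : 0 < r₀ := (hsmall (left_mem_Ico.2 hr₀)).2.1
  obtain ⟨r, hr, hmax⟩ := isCompact_Icc.exists_isMaxOn (nonempty_Icc.2 (le_of_lt hr₀))
    (hcont.mono fun s hs => hr₀_pos.trans_le hs.1)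
  have hvr : 0 < v r :=
    (hpos r₀ ⟨hr₀_pos, hr₀⟩).trans_le (hmax (left_mem_Icc.2 (le_of_lt hr₀)))
  have hrt : r < t₁ := hr.2.lt_of_ne (by rintro rfl; exact hvr.not_ge hvt₁)
  have hr_pos : 0 < r := hr₀_pos.trans_le hr.1
  have hle := hv.mul_le_mul_add ha hr_pos hrt (fun s hs => (hpos s ⟨hs.1, hs.2.trans hrt⟩).le)
    fun s hs => hmax ⟨hr.1.trans hs.1, hs.2⟩
  have hlt := mul_lt_mul_of_pos_right (hsmall ⟨hr.1, hrt⟩).1 hvr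
  linarith [mul_nonpos_of_nonneg_of_nonpos (ha.pos hr_pos).le hvt₁]

end Volterra

section MittagLefflerSign

variable {α β z : ℝ}

lemma isLogConvexKernel_const_mul_rpow {c : ℝ} (hc : 0 < c) (hβ : 0 < β) (hβ1 : β ≤ 1) :
    IsLogConvexKernel fun t => c * t ^ (β - 1) where
  pos ht := by positivity
  continuousOn := continuousOn_const.mul
    (continuousOn_id.rpow_const fun _ ht => Or.inl (ne_of_gt ht))
  intervalIntegrable _ :=
    (intervalIntegral.intervalIntegrable_rpow' (by linarith)).const_mul c
  mul_le_mul {x y h} hx hxy hh := by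
    have hy : 0 < y := hx.trans_le hxy
    have hle : ((x + h) * y) ^ (β - 1) ≤ ((y + h) * x) ^ (β - 1) :=
      Real.rpow_le_rpow_of_nonpos (by positivity)
        (by linarith [mul_le_mul_of_nonneg_left hxy hh.le]) (by linarith)
    rw [Real.mul_rpow (by positivity) hy.le, Real.mul_rpow (by positivity) hx.le] at hle
    linarith [mul_le_mul_of_nonneg_left hle (mul_pos hc hc).le]

lemma mlKernel_eq_rpow_div_Gamma_add (hα : 0 < α) (hβ : 0 < β) (z : ℝ) {t : ℝ} (ht : 0 < t) :
    mlKernel α β z t = t ^ (β - 1) / Real.Gamma β + z * mlKernel α (α + β) z t := by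
  rw [mlKernel, mlKernel, ml_eq_one_div_Gamma_add hα hβ, add_sub_assoc, Real.rpow_add ht]
  ring

lemma isResolvent_mlKernel (hα : 0 < α) (z : ℝ) :
    IsResolvent (fun t => -z / Real.Gamma α * t ^ (α - 1)) (fun t => -z * mlKernel α α z t) := by
  have hmul (t s : ℝ) : -z / Real.Gamma α * (t - s) ^ (α - 1) * (-z * mlKernel α α z s)
      = z ^ 2 / Real.Gamma α * ((t - s) ^ (α - 1) * mlKernel α α z s) := by ring
  constructor
  · intro t ht
    simp only [hmul]
    exact (intervalIntegrable_sub_rpow_mul_mlKernel hα hα hα z ht).const_mul _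
  · intro t ht
    simp only [hmul]
    rw [intervalIntegral.integral_const_mul, integral_sub_rpow_mul_mlKernel hα hα hα z ht,
      mlKernel_eq_rpow_div_Gamma_add hα hα z ht]
    field_simp
    ring

lemma eventually_mlKernel_pos (hα : 0 < α) (hβ : 0 < β) (z : ℝ) :
    ∀ᶠ t in 𝓝[>] 0, 0 < mlKernel α β z t := by
  have hzero : 0 < ml α β (z * 0 ^ α) := by
    rw [Real.zero_rpow hα.ne', mul_zero, ml_zero]
    exact one_div_pos.2 (Real.Gamma_pos_of_pos hβ)
  have hnear := ((continuous_ml_mul_rpow hα hβ z).tendsto 0).eventually_const_lt hzero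
  filter_upwards [hnear.filter_mono nhdsWithin_le_nhds, self_mem_nhdsWithin] with t hml ht
  exact mul_pos (Real.rpow_pos_of_pos ht _) hml

theorem ml_self_pos (hα : 0 < α) (hα1 : α ≤ 1) (hz : z ≤ 0) : 0 < ml α α z := by
  rcases hz.eq_or_lt with rfl | hz
  · rw [ml_zero]
    exact one_div_pos.2 (Real.Gamma_pos_of_pos hα)
  have hz' : 0 < -z := neg_pos.2 hz
  have hpos := (isResolvent_mlKernel hα z).pos (t := 1)
    (isLogConvexKernel_const_mul_rpow (div_pos hz' (Real.Gamma_pos_of_pos hα)) hα hα1)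
    (continuousOn_const.mul (continuousOn_mlKernel hα hα z))
    ((eventually_mlKernel_pos hα hα z).mono fun _ => mul_pos hz') one_pos
  simpa [mlKernel] using pos_of_mul_pos_right hpos hz'.le

theorem ml_nonneg (hα : 0 < α) (hα1 : α ≤ 1) (hαβ : α ≤ β) (hz : z ≤ 0) : 0 ≤ ml α β z := by
  rcases hαβ.eq_or_lt with rfl | hαβ
  · exact (ml_self_pos hα hα1 hz).le
  have hint : 0 ≤ ∫ s in (0 : ℝ)..1, (1 - s) ^ (β - α - 1) * mlKernel α α z s :=
    intervalIntegral.integral_nonneg zero_le_one fun s hs =>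
      mul_nonneg (Real.rpow_nonneg (sub_nonneg.2 hs.2) _) <| mul_nonneg (Real.rpow_nonneg hs.1 _)
        (ml_self_pos hα hα1 (mul_nonpos_of_nonpos_of_nonneg hz (Real.rpow_nonneg hs.1 _))).le
  rw [integral_sub_rpow_mul_mlKernel hα hα (sub_pos.2 hαβ) z one_pos, add_sub_cancel] at hint
  simpa [mlKernel] using nonneg_of_mul_nonneg_right hint (Real.Gamma_pos_of_pos (sub_pos.2 hαβ))

theorem ml_le_one_div_Gamma (hα : 0 < α) (hα1 : α ≤ 1) (hαβ : α ≤ β) (hz : z ≤ 0) :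
    ml α β z ≤ 1 / Real.Gamma β := by
  have hβ : 0 < β := hα.trans_le hαβ
  rw [ml_eq_one_div_Gamma_add hα hβ, add_le_iff_nonpos_right]
  exact mul_nonpos_of_nonpos_of_nonneg hz (ml_nonneg hα hα1 (le_add_of_nonneg_right hβ.le) hz)

lemma abs_ml_one_le_one (hα : 0 < α) (hα1 : α ≤ 1) (hz : z ≤ 0) : |ml α 1 z| ≤ 1 := by
  rw [abs_of_nonneg (ml_nonneg hα hα1 hα1 hz)]
  simpa using ml_le_one_div_Gamma hα hα1 hα1 hz

lemma abs_mlKernel_self_le (hα : 0 < α) (hα1 : α ≤ 1) (hz : z ≤ 0) {t : ℝ} (ht : 0 ≤ t) :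
    |mlKernel α α z t| ≤ t ^ (α - 1) / Real.Gamma α := by
  have hzt : z * t ^ α ≤ 0 := mul_nonpos_of_nonpos_of_nonneg hz (Real.rpow_nonneg ht _)
  rw [mlKernel, abs_mul, abs_of_nonneg (Real.rpow_nonneg ht _),
    abs_of_pos (ml_self_pos hα hα1 hzt), div_eq_mul_one_div]
  exact mul_le_mul_of_nonneg_left (ml_le_one_div_Gamma hα hα1 le_rfl hzt) (Real.rpow_nonneg ht _)

end MittagLefflerSign

section Caputo

variable {ι : Type*} {α β t : ℝ} {f : ι → ℝ → ℝ} {M : ι → ℝ}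

lemma caputo_const_mul (α c : ℝ) (g : ℝ → ℝ) (t : ℝ) :
    caputo α (fun s => c * g s) t = c * caputo α g t := by
  simp only [caputo, deriv_const_mul_field, mul_left_comm _ c, intervalIntegral.integral_const_mul]

lemma caputo_ml_one_mul_rpow (hα : 0 < α) (hα1 : α < 1) (z : ℝ) (ht : 0 < t) :
    caputo α (fun s => ml α 1 (z * s ^ α)) t = z * ml α 1 (z * t ^ α) := by
  have hΓ : Real.Gamma (1 - α) ≠ 0 := (Real.Gamma_pos_of_pos (sub_pos.2 hα1)).ne'
  have hderiv : ∀ s ∈ Ioc 0 t, (t - s) ^ (-α) * deriv (fun s => ml α 1 (z * s ^ α)) s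
      = z * ((t - s) ^ (1 - α - 1) * mlKernel α α z s) := fun s hs => by
    rw [(hasDerivAt_ml_one_mul_rpow hα z hs.1).deriv, sub_sub_cancel_left, mul_left_comm]
  rw [caputo, intervalIntegral.integral_of_le ht.le,
    setIntegral_congr_fun measurableSet_Ioc hderiv, ← intervalIntegral.integral_of_le ht.le,
    intervalIntegral.integral_const_mul,
    integral_sub_rpow_mul_mlKernel hα hα (sub_pos.2 hα1) z ht, add_sub_cancel, mlKernel, sub_self,
    Real.rpow_zero, one_mul]
  field_simp

lemma intervalIntegrable_sub_rpow_neg_mul_rpow (hα1 : α < 1) (hβ : 0 < β) (ht : 0 < t) :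
    IntervalIntegrable (fun s : ℝ => (t - s) ^ (-α) * s ^ (β - 1)) volume 0 t := by
  simpa only [sub_sub_cancel_left] using
    intervalIntegrable_sub_rpow_mul_rpow hβ (sub_pos.2 hα1) ht

lemma norm_sub_rpow_mul_le {s : ℝ} (hst : s ≤ t) {C d w : ℝ} (hd : |d| ≤ C * w) :
    ‖(t - s) ^ (-α) * d‖ ≤ C * ((t - s) ^ (-α) * w) := by
  have hts : 0 ≤ (t - s) ^ (-α) := Real.rpow_nonneg (sub_nonneg.2 hst) _
  rw [norm_mul, Real.norm_of_nonneg hts, Real.norm_eq_abs, mul_left_comm]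
  exact mul_le_mul_of_nonneg_left hd hts

lemma aestronglyMeasurable_sub_rpow_mul_deriv (α t : ℝ) (g : ℝ → ℝ) (μ : Measure ℝ) :
    AEStronglyMeasurable (fun s => (t - s) ^ (-α) * deriv g s) μ :=
  (Measurable.mul (by fun_prop) (measurable_deriv g)).aestronglyMeasurable

lemma intervalIntegrable_sub_rpow_mul_deriv {g : ℝ → ℝ} {C : ℝ} (hα1 : α < 1) (hβ : 0 < β)
    (ht : 0 < t) (hg : ∀ s ∈ Ioc 0 t, |deriv g s| ≤ C * s ^ (β - 1)) :
    IntervalIntegrable (fun s => (t - s) ^ (-α) * deriv g s) volume 0 t := by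
  refine ((intervalIntegrable_sub_rpow_neg_mul_rpow hα1 hβ ht).const_mul C).mono_fun'
    (aestronglyMeasurable_sub_rpow_mul_deriv α t g _) ?_
  rw [uIoc_of_le ht.le]
  filter_upwards [ae_restrict_mem measurableSet_Ioc] with s hs
  exact norm_sub_rpow_mul_le hs.2 (hg s hs)

lemma hasDerivAt_tsum_of_abs_le_mul {f' : ι → ℝ → ℝ} {g : ℝ → ℝ} (hM : Summable M)
    (hg : ContinuousAt g t)
    (hf : ∀ᶠ s in 𝓝 t, ∀ i, HasDerivAt (f i) (f' i s) s ∧ |f' i s| ≤ M i * g s)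
    (hft : Summable fun i => f i t) :
    HasDerivAt (fun s => ∑' i, f i s) (∑' i, f' i t) t := by
  have hg_bdd : ∀ᶠ s in 𝓝 t, |g s| < |g t| + 1 := hg.abs.eventually_lt_const (lt_add_one _)
  obtain ⟨ε, hε, hball⟩ := Metric.eventually_nhds_iff_ball.1 (hf.and hg_bdd)
  have ht : t ∈ Metric.ball t ε := Metric.mem_ball_self hε
  refine hasDerivAt_tsum_of_isPreconnected (hM.abs.mul_right (|g t| + 1)) Metric.isOpen_ball
    (convex_ball t ε).isPreconnected (fun i s hs => ((hball s hs).1 i).1) (fun i s hs => ?_)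
    ht hft ht
  calc |f' i s| ≤ |M i * g s| := ((hball s hs).1 i).2.trans (le_abs_self _)
    _ ≤ |M i| * (|g t| + 1) := by
        rw [abs_mul]
        exact mul_le_mul_of_nonneg_left (hball s hs).2.le (abs_nonneg _)

section Series

variable (hα1 : α < 1) (hβ : 0 < β) (hM : Summable M)
  (hdiff : ∀ i s, 0 < s → DifferentiableAt ℝ (f i) s)
  (hbound : ∀ i s, 0 < s → |deriv (f i) s| ≤ M i * s ^ (β - 1))
  (hsum : ∀ s, 0 < s → Summable fun i => f i s) (ht : 0 < t)

include hM hdiff hbound hsum ht in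
lemma hasSum_deriv_of_abs_deriv_le :
    HasSum (fun i => deriv (f i) t) (deriv (fun s => ∑' i, f i s) t) := by
  have hderiv := hasDerivAt_tsum_of_abs_le_mul hM
    (Real.continuousAt_rpow_const t (β - 1) (Or.inl ht.ne'))
    ((eventually_gt_nhds ht).mono fun s hs i => ⟨(hdiff i s hs).hasDerivAt, hbound i s hs⟩)
    (hsum t ht)
  rw [hderiv.deriv]
  exact ((hM.mul_right (t ^ (β - 1))).of_norm_bounded fun i => hbound i t ht).hasSum

include hα1 hβ hM hdiff hbound hsum ht in
lemma intervalIntegrable_sub_rpow_mul_deriv_tsum :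
    IntervalIntegrable (fun s => (t - s) ^ (-α) * deriv (fun r => ∑' i, f i r) s) volume 0 t := by
  refine intervalIntegrable_sub_rpow_mul_deriv hα1 hβ ht (C := ∑' i, M i) fun s hs => ?_
  rw [← (hasSum_deriv_of_abs_deriv_le hM hdiff hbound hsum hs.1).tsum_eq, ← Real.norm_eq_abs]
  exact tsum_of_norm_bounded (hM.hasSum.mul_right (s ^ (β - 1))) fun i => hbound i s hs.1

include hα1 hβ hM hdiff hbound hsum ht in
lemma hasSum_caputo [Countable ι] :
    HasSum (fun i => caputo α (f i) t) (caputo α (fun s => ∑' i, f i s) t) := by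
  have hintegral : HasSum (fun i => ∫ s in (0 : ℝ)..t, (t - s) ^ (-α) * deriv (f i) s)
      (∫ s in (0 : ℝ)..t, (t - s) ^ (-α) * deriv (fun r => ∑' i, f i r) s) := by
    refine intervalIntegral.hasSum_integral_of_dominated_convergence
      (fun i s => M i * ((t - s) ^ (-α) * s ^ (β - 1)))
      (fun i => aestronglyMeasurable_sub_rpow_mul_deriv α t (f i) _)
      (fun i => Eventually.of_forall fun s hs => ?_)
      (Eventually.of_forall fun s _ => hM.mul_right _) ?_ (Eventually.of_forall fun s hs => ?_)
    · rw [uIoc_of_le ht.le] at hs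
      exact norm_sub_rpow_mul_le hs.2 (hbound i s hs.1)
    · simp only [tsum_mul_right]
      exact (intervalIntegrable_sub_rpow_neg_mul_rpow hα1 hβ ht).const_mul _
    · rw [uIoc_of_le ht.le] at hs
      exact (hasSum_deriv_of_abs_deriv_le hM hdiff hbound hsum hs.1).mul_left _
  exact hintegral.mul_left _

end Series

section MittagLefflerSeries

variable {b z : ι → ℝ} (hα : 0 < α) (hα1 : α < 1) (hz : ∀ i, z i ≤ 0) (hb : Summable b)
  (hbz : Summable fun i => b i * z i) (ht : 0 < t)

include hα hα1 hz in
lemma abs_deriv_mul_ml_one_mul_rpow_le (i : ι) (ht : 0 < t) :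
    |deriv (fun s => b i * ml α 1 (z i * s ^ α)) t|
      ≤ |b i * z i| / Real.Gamma α * t ^ (α - 1) := by
  rw [((hasDerivAt_ml_one_mul_rpow hα (z i) ht).const_mul (b i)).deriv, ← mul_assoc, abs_mul]
  calc |b i * z i| * |mlKernel α α (z i) t|
      ≤ |b i * z i| * (t ^ (α - 1) / Real.Gamma α) := by
        gcongr
        exact abs_mlKernel_self_le hα hα1.le (hz i) ht.le
    _ = |b i * z i| / Real.Gamma α * t ^ (α - 1) := by ring

include hα hα1 hz hb in
lemma summable_mul_ml_one_mul_rpow (ht : 0 ≤ t) :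
    Summable fun i => b i * ml α 1 (z i * t ^ α) :=
  hb.abs.of_norm_bounded fun i => by
    rw [norm_mul]
    exact mul_le_of_le_one_right (abs_nonneg _) (abs_ml_one_le_one hα hα1.le
      (mul_nonpos_of_nonpos_of_nonneg (hz i) (Real.rpow_nonneg ht _)))

include hα hα1 hz hb hbz ht

lemma intervalIntegrable_sub_rpow_mul_deriv_tsum_ml :
    IntervalIntegrable
      (fun s => (t - s) ^ (-α) * deriv (fun r => ∑' i, b i * ml α 1 (z i * r ^ α)) s)
      volume 0 t :=
  intervalIntegrable_sub_rpow_mul_deriv_tsum hα1 hα (hbz.abs.div_const _)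
    (fun i _ hs => ((hasDerivAt_ml_one_mul_rpow hα (z i) hs).const_mul (b i)).differentiableAt)
    (fun i _ hs => abs_deriv_mul_ml_one_mul_rpow_le hα hα1 hz i hs)
    (fun _ hs => summable_mul_ml_one_mul_rpow hα hα1 hz hb hs.le) ht

lemma caputo_tsum_ml [Countable ι] :
    caputo α (fun s => ∑' i, b i * ml α 1 (z i * s ^ α)) t
      = ∑' i, b i * (z i * ml α 1 (z i * t ^ α)) := by
  have hsum := hasSum_caputo hα1 hα (hbz.abs.div_const _)
    (fun i _ hs => ((hasDerivAt_ml_one_mul_rpow hα (z i) hs).const_mul (b i)).differentiableAt)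
    (fun i _ hs => abs_deriv_mul_ml_one_mul_rpow_le hα hα1 hz i hs)
    (fun _ hs => summable_mul_ml_one_mul_rpow hα hα1 hz hb hs.le) ht
  simp only [caputo_const_mul, caputo_ml_one_mul_rpow hα hα1 _ ht] at hsum
  exact hsum.tsum_eq.symm

end MittagLefflerSeries

end Caputo

section UniformSummability

variable {ι Z : Type*} {S : Set Z}

lemma summableUniformlyOn_of_tendstoUniformlyOn_range {f : ℕ → Z → ℝ} {g : Z → ℝ}
    (hf : ∀ i, ∀ z ∈ S, 0 ≤ f i z)
    (h : TendstoUniformlyOn (fun N z => ∑ i ∈ Finset.range N, f i z) g atTop S) :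
    SummableUniformlyOn f S := by
  have hsum (z) (hz : z ∈ S) : HasSum (f · z) (g z) :=
    (hasSum_iff_tendsto_nat_of_nonneg (hf · z hz) _).2 (h.tendsto_at hz)
  refine HasSumUniformlyOn.summableUniformlyOn (g := g)
    (hasSumUniformlyOn_iff_tendstoUniformlyOn.2 ?_)
  rw [Metric.tendstoUniformlyOn_iff] at h ⊢
  intro ε hε
  obtain ⟨N, hN⟩ := (h ε hε).exists
  filter_upwards [eventually_ge_atTop (Finset.range N)] with s hs z hz
  have hlower : ∑ i ∈ Finset.range N, f i z ≤ ∑ i ∈ s, f i z :=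
    Finset.sum_le_sum_of_subset_of_nonneg hs fun i _ _ => hf i z hz
  have hupper : ∑ i ∈ s, f i z ≤ g z := sum_le_hasSum s (fun i _ => hf i z hz) (hsum z hz)
  have hclose := hN z hz
  rw [Real.dist_eq, abs_of_nonneg (by linarith)] at hclose ⊢
  linarith

lemma summableUniformlyOn_of_norm_le {E : Type*} [NormedAddCommGroup E] [CompleteSpace E]
    {f : ι → Z → E} {Q : ι → Z → ℝ} (hQ : SummableUniformlyOn Q S)
    (hfQ : ∀ i, ∀ z ∈ S, ‖f i z‖ ≤ Q i z) : SummableUniformlyOn f S := by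
  have htail (s : Finset ι) (z) (hz : z ∈ S) :
      dist (∑' i, f i z) (∑ i ∈ s, f i z) ≤ dist (∑' i, Q i z) (∑ i ∈ s, Q i z) := by
    have hQz := hQ.summable hz
    rw [dist_eq_norm, Real.dist_eq]
    exact (HasSum.norm_le_of_bounded
      (s.hasSum_iff_compl.1 (hQz.of_norm_bounded (hfQ · z hz)).hasSum)
      (s.hasSum_iff_compl.1 hQz.hasSum) fun i => hfQ i z hz).trans (le_abs_self _)
  refine HasSumUniformlyOn.summableUniformlyOn (g := fun z => ∑' i, f i z)
    (hasSumUniformlyOn_iff_tendstoUniformlyOn.2 ?_)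
  have hQu := hasSumUniformlyOn_iff_tendstoUniformlyOn.1 hQ.hasSumUniformlyOn
  rw [Metric.tendstoUniformlyOn_iff] at hQu ⊢
  exact fun ε hε => (hQu ε hε).mono fun s hs z hz => (htail s z hz).trans_lt (hs z hz)

lemma summableUniformlyOn_comp {Z' E : Type*} [NormedAddCommGroup E] {S' : Set Z'}
    {f : ι → Z → E} (hf : SummableUniformlyOn f S) {φ : Z' → Z} (hφ : MapsTo φ S' S) :
    SummableUniformlyOn (fun i z => f i (φ z)) S' :=
  HasSumUniformlyOn.summableUniformlyOn (g := fun z => ∑' i, f i (φ z))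
    (hasSumUniformlyOn_iff_tendstoUniformlyOn.2
      (((hasSumUniformlyOn_iff_tendstoUniformlyOn.1 hf.hasSumUniformlyOn).comp φ).mono hφ))

lemma summableUniformlyOn_add {E : Type*} [NormedAddCommGroup E] {f g : ι → Z → E}
    (hf : SummableUniformlyOn f S) (hg : SummableUniformlyOn g S) :
    SummableUniformlyOn (fun i z => f i z + g i z) S := by
  refine HasSumUniformlyOn.summableUniformlyOn (g := fun z => ∑' i, f i z + ∑' i, g i z)
    (hasSumUniformlyOn_iff_tendstoUniformlyOn.2 ?_)
  simp only [Finset.sum_add_distrib]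
  exact (hasSumUniformlyOn_iff_tendstoUniformlyOn.1 hf.hasSumUniformlyOn).add
    (hasSumUniformlyOn_iff_tendstoUniformlyOn.1 hg.hasSumUniformlyOn)

lemma abs_mul_le_mul_sq_add_sq_div {w : ℝ} (hw : 0 < w) (c y : ℝ) :
    |c * y| ≤ w * c ^ 2 + y ^ 2 / w := by
  have hamgm := two_mul_le_add_sq (w * |c|) |y|
  have hnonneg : 0 ≤ w * |c| * |y| := by positivity
  rw [mul_pow, sq_abs, sq_abs] at hamgm
  rw [show w * c ^ 2 + y ^ 2 / w = (w ^ 2 * c ^ 2 + y ^ 2) / w by field_simp,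
    le_div_iff₀ hw, abs_mul]
  linarith

lemma summableUniformlyOn_mul_of_sq_div {w c : ι → ℝ} {e Y : ι → Z → ℝ} (hw : ∀ i, 0 < w i)
    (hc : Summable fun i => w i * c i ^ 2) (he : ∀ i, ∀ z ∈ S, |e i z| ≤ |c i|)
    (hY : SummableUniformlyOn (fun i z => Y i z ^ 2 / w i) S) :
    SummableUniformlyOn (fun i z => e i z * Y i z) S := by
  have hc' : SummableUniformlyOn (fun i (_ : Z) => w i * c i ^ 2) S :=
    (HasSumUniformlyOn.of_norm_le_summable hc.norm fun _ _ _ => le_rfl).summableUniformlyOn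
  refine summableUniformlyOn_of_norm_le (summableUniformlyOn_add hc' hY) fun i z hz => ?_
  calc ‖e i z * Y i z‖ ≤ |c i * Y i z| := by
        rw [Real.norm_eq_abs, abs_mul, abs_mul]
        exact mul_le_mul_of_nonneg_right (he i z hz) (abs_nonneg _)
    _ ≤ w i * c i ^ 2 + Y i z ^ 2 / w i := abs_mul_le_mul_sq_add_sq_div (hw i) _ _

lemma continuousOn_tsum_of_summableUniformlyOn {E : Type*} [NormedAddCommGroup E]
    [TopologicalSpace Z] {f : ι → Z → E} (hf : ∀ i, ContinuousOn (f i) S)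
    (hsum : SummableUniformlyOn f S) : ContinuousOn (fun z => ∑' i, f i z) S :=
  (hasSumUniformlyOn_iff_tendstoUniformlyOn.1 hsum.hasSumUniformlyOn).continuousOn
    (Frequently.of_forall fun _ => continuousOn_finsetSum _ fun i _ => hf i)

lemma hasDerivAt_tsum_of_summableUniformlyOn {𝕜 F : Type*} [RCLike 𝕜] [NormedAddCommGroup F]
    [NormedSpace 𝕜 F] {U : Set 𝕜} (hU : IsOpen U) {f f' : ι → 𝕜 → F}
    (hf : ∀ i, ∀ x ∈ U, HasDerivAt (f i) (f' i x) x) (hsum : ∀ x ∈ U, Summable fun i => f i x)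
    (hf' : SummableUniformlyOn f' U) {x : 𝕜} (hx : x ∈ U) :
    HasDerivAt (fun y => ∑' i, f i y) (∑' i, f' i x) x :=
  hasDerivAt_of_tendstoUniformlyOn hU
    (hasSumUniformlyOn_iff_tendstoUniformlyOn.1 hf'.hasSumUniformlyOn)
    (Eventually.of_forall fun _ y hy => HasDerivAt.fun_sum fun i _ => hf i y hy)
    (fun y hy => (hsum y hy).hasSum) hx

end UniformSummability

section TwiceDifferentiable

variable {𝕜 F : Type*} [NontriviallyNormedField 𝕜] [NormedAddCommGroup F] [NormedSpace 𝕜 F]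
  {U : Set 𝕜} {f f' f'' : 𝕜 → F}

lemma hasDerivAt_deriv_of_hasDerivAt (hU : IsOpen U) (hf : ∀ x ∈ U, HasDerivAt f (f' x) x)
    (hf' : ∀ x ∈ U, HasDerivAt f' (f'' x) x) {x : 𝕜} (hx : x ∈ U) :
    HasDerivAt (deriv f) (f'' x) x :=
  (hf' x hx).congr_of_eventuallyEq
    (eventuallyEq_of_mem (hU.mem_nhds hx) fun y hy => (hf y hy).deriv)

lemma contDiffOn_two_iff_of_isOpen (hU : IsOpen U) :
    ContDiffOn 𝕜 2 f U ↔
      DifferentiableOn 𝕜 f U ∧ DifferentiableOn 𝕜 (deriv f) U ∧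
        ContinuousOn (deriv (deriv f)) U := by
  rw [show (2 : WithTop ℕ∞) = 0 + 1 + 1 by norm_num, contDiffOn_succ_iff_deriv_of_isOpen hU,
    contDiffOn_succ_iff_deriv_of_isOpen hU, contDiffOn_zero]
  simp

lemma contDiffOn_two_of_hasDerivAt (hU : IsOpen U) (hf : ∀ x ∈ U, HasDerivAt f (f' x) x)
    (hf' : ∀ x ∈ U, HasDerivAt f' (f'' x) x) (hf'' : ContinuousOn f'' U) :
    ContDiffOn 𝕜 2 f U := by
  have hderiv (x) (hx : x ∈ U) := hasDerivAt_deriv_of_hasDerivAt hU hf hf' hx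
  exact (contDiffOn_two_iff_of_isOpen hU).2
    ⟨fun x hx => (hf x hx).differentiableAt.differentiableWithinAt,
      fun x hx => (hderiv x hx).differentiableAt.differentiableWithinAt,
      hf''.congr fun x hx => (hderiv x hx).deriv⟩

end TwiceDifferentiable

section EigenfunctionExpansion

variable {ι : Type*} {a b : ℝ} {p q : ℝ → ℝ} {lam : ι → ℝ} {X : ι → ℝ → ℝ}

/-- Eigenpairs `(λ_i, X_i)` of the Dirichlet problem `-(p X')' + q X = λ X` on `[a, b]` for which
the weighted eigenfunction series converge uniformly. The index type is arbitrary, so convergence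
is unconditional; derivatives are taken on the open interval, where `deriv` is not one-sided. -/
structure DirichletEigenfamily (a b : ℝ) (p q : ℝ → ℝ) (lam : ι → ℝ) (X : ι → ℝ → ℝ) : Prop where
  differentiableOn_coeff : DifferentiableOn ℝ p (Ioo a b)
  pos (i : ι) : 0 < lam i
  continuousOn (i : ι) : ContinuousOn (X i) (Icc a b)
  contDiffOn (i : ι) : ContDiffOn ℝ 2 (X i) (Ioo a b)
  eigen (i : ι) (x : ℝ) (hx : x ∈ Ioo a b) :
    -deriv (fun y => p y * deriv (X i) y) x + q x * X i x = lam i * X i x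
  left_eq_zero (i : ι) : X i a = 0
  right_eq_zero (i : ι) : X i b = 0
  summable_sq : SummableUniformlyOn (fun i x => X i x ^ 2 / lam i) (Icc a b)
  summable_deriv_sq :
    SummableUniformlyOn (fun i x => deriv (X i) x ^ 2 / lam i ^ 2) (Ioo a b)
  summable_deriv_deriv_sq :
    SummableUniformlyOn (fun i x => deriv (deriv (X i)) x ^ 2 / lam i ^ 3) (Ioo a b)

namespace DirichletEigenfamily

variable (hX : DirichletEigenfamily a b p q lam X) {c e : ι → ℝ}

include hX

lemma summable_pow_mul_sq (hc : Summable fun i => (lam i + lam i ^ 3) * c i ^ 2) {k : ℕ}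
    (hk : k ∈ Icc 1 3) : Summable fun i => lam i ^ k * c i ^ 2 := by
  refine hc.of_nonneg_of_le (fun i => by have := hX.pos i; positivity) fun i => ?_
  have hpos := hX.pos i
  gcongr
  obtain h | h := le_total (lam i) 1
  · linarith [pow_le_of_le_one hpos.le h (by have := hk.1; omega : k ≠ 0), pow_pos hpos 3]
  · linarith [pow_le_pow_right₀ h hk.2]

lemma summable_weight_mul_sq_of_abs_le (hc : Summable fun i => (lam i + lam i ^ 3) * c i ^ 2)
    (he : ∀ i, |e i| ≤ |c i|) : Summable fun i => (lam i + lam i ^ 3) * e i ^ 2 := by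
  refine hc.of_nonneg_of_le (fun i => by have := hX.pos i; positivity) fun i => ?_
  have := hX.pos i
  exact mul_le_mul_of_nonneg_left (sq_le_sq.2 (he i)) (by positivity)

lemma summableUniformlyOn_mul {Z : Type*} {S : Set Z} {φ : Z → ℝ} (hφ : MapsTo φ S (Icc a b))
    (hc : Summable fun i => (lam i + lam i ^ 3) * c i ^ 2) {d : ι → Z → ℝ}
    (hd : ∀ i, ∀ z ∈ S, |d i z| ≤ |c i|) :
    SummableUniformlyOn (fun i z => d i z * X i (φ z)) S :=
  summableUniformlyOn_mul_of_sq_div hX.pos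
    (by simpa using hX.summable_pow_mul_sq hc (k := 1) (by simp)) hd
    (summableUniformlyOn_comp hX.summable_sq hφ)

lemma hasDerivAt (i : ι) {x : ℝ} (hx : x ∈ Ioo a b) : HasDerivAt (X i) (deriv (X i) x) x :=
  (((contDiffOn_two_iff_of_isOpen isOpen_Ioo).1 (hX.contDiffOn i)).1.differentiableAt
    (isOpen_Ioo.mem_nhds hx)).hasDerivAt

lemma hasDerivAt_deriv (i : ι) {x : ℝ} (hx : x ∈ Ioo a b) :
    HasDerivAt (deriv (X i)) (deriv (deriv (X i)) x) x :=
  (((contDiffOn_two_iff_of_isOpen isOpen_Ioo).1 (hX.contDiffOn i)).2.1.differentiableAt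
    (isOpen_Ioo.mem_nhds hx)).hasDerivAt

section Superposition

variable (he : Summable fun i => (lam i + lam i ^ 3) * e i ^ 2)

include he

lemma summable_mul {x : ℝ} (hx : x ∈ Icc a b) : Summable fun i => e i * X i x :=
  (hX.summableUniformlyOn_mul (mapsTo_id _) he fun _ _ _ => le_rfl).summable hx

lemma summable_mul_lam_mul {x : ℝ} (hx : x ∈ Icc a b) :
    Summable fun i => e i * X i x * lam i := by
  have hlame : Summable fun i => lam i * (lam i * e i) ^ 2 :=
    (hX.summable_pow_mul_sq he (k := 3) (by simp)).congr fun i => by ring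
  exact ((summableUniformlyOn_mul_of_sq_div hX.pos hlame (fun _ _ _ => le_rfl)
    hX.summable_sq).summable hx).congr fun i => by ring

lemma summableUniformlyOn_mul_deriv :
    SummableUniformlyOn (fun i x => e i * deriv (X i) x) (Ioo a b) :=
  summableUniformlyOn_mul_of_sq_div (fun i => pow_pos (hX.pos i) 2)
    (hX.summable_pow_mul_sq he (by simp)) (fun _ _ _ => le_rfl) hX.summable_deriv_sq

lemma summableUniformlyOn_mul_deriv_deriv :
    SummableUniformlyOn (fun i x => e i * deriv (deriv (X i)) x) (Ioo a b) :=
  summableUniformlyOn_mul_of_sq_div (fun i => pow_pos (hX.pos i) 3)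
    (hX.summable_pow_mul_sq he (by simp)) (fun _ _ _ => le_rfl) hX.summable_deriv_deriv_sq

lemma hasDerivAt_tsum_mul {x : ℝ} (hx : x ∈ Ioo a b) :
    HasDerivAt (fun y => ∑' i, e i * X i y) (∑' i, e i * deriv (X i) x) x :=
  hasDerivAt_tsum_of_summableUniformlyOn isOpen_Ioo
    (fun i _ hy => (hX.hasDerivAt i hy).const_mul (e i))
    (fun _ hy => hX.summable_mul he (Ioo_subset_Icc_self hy))
    (hX.summableUniformlyOn_mul_deriv he) hx

lemma hasDerivAt_tsum_mul_deriv {x : ℝ} (hx : x ∈ Ioo a b) :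
    HasDerivAt (fun y => ∑' i, e i * deriv (X i) y) (∑' i, e i * deriv (deriv (X i)) x) x :=
  hasDerivAt_tsum_of_summableUniformlyOn isOpen_Ioo
    (fun i _ hy => (hX.hasDerivAt_deriv i hy).const_mul (e i))
    (fun _ hy => (hX.summableUniformlyOn_mul_deriv he).summable hy)
    (hX.summableUniformlyOn_mul_deriv_deriv he) hx

lemma hasDerivAt_deriv_tsum_mul {x : ℝ} (hx : x ∈ Ioo a b) :
    HasDerivAt (deriv fun y => ∑' i, e i * X i y) (∑' i, e i * deriv (deriv (X i)) x) x :=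
  hasDerivAt_deriv_of_hasDerivAt isOpen_Ioo (fun _ hy => hX.hasDerivAt_tsum_mul he hy)
    (fun _ hy => hX.hasDerivAt_tsum_mul_deriv he hy) hx

lemma contDiffOn_tsum_mul : ContDiffOn ℝ 2 (fun y => ∑' i, e i * X i y) (Ioo a b) :=
  contDiffOn_two_of_hasDerivAt isOpen_Ioo (fun _ hy => hX.hasDerivAt_tsum_mul he hy)
    (fun _ hy => hX.hasDerivAt_tsum_mul_deriv he hy)
    (continuousOn_tsum_of_summableUniformlyOn
      (fun i => continuousOn_const.mul
        ((contDiffOn_two_iff_of_isOpen isOpen_Ioo).1 (hX.contDiffOn i)).2.2)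
      (hX.summableUniformlyOn_mul_deriv_deriv he))

lemma deriv_mul_deriv_tsum_mul_sub {x : ℝ} (hx : x ∈ Ioo a b) :
    deriv (fun y => p y * deriv (fun z => ∑' i, e i * X i z) y) x - q x * ∑' i, e i * X i x
      = -∑' i, e i * (lam i * X i x) := by
  have hp := (hX.differentiableOn_coeff.differentiableAt (isOpen_Ioo.mem_nhds hx)).hasDerivAt
  have heigen (i : ι) : e i * (lam i * X i x) = q x * (e i * X i x)
      - (deriv p x * (e i * deriv (X i) x) + p x * (e i * deriv (deriv (X i)) x)) := by
    rw [← hX.eigen i x hx, (hp.fun_mul (hX.hasDerivAt_deriv i hx)).deriv]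
    ring
  have h0 := (hX.summable_mul he (Ioo_subset_Icc_self hx)).mul_left (q x)
  have h1 := ((hX.summableUniformlyOn_mul_deriv he).summable hx).mul_left (deriv p x)
  have h2 := ((hX.summableUniformlyOn_mul_deriv_deriv he).summable hx).mul_left (p x)
  rw [(hp.fun_mul (hX.hasDerivAt_deriv_tsum_mul he hx)).deriv, (hX.hasDerivAt_tsum_mul he hx).deriv]
  simp only [heigen]
  rw [h0.tsum_sub (h1.add h2), h1.tsum_add h2, tsum_mul_left, tsum_mul_left, tsum_mul_left]
  ring

end Superposition

end DirichletEigenfamily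

section MittagLefflerExpansion

/-- The eigenfunction expansion `u(x, t) = ∑ i, c i * E_α(-λ i * t ^ α) * X i x`: each mode of the
initial datum is damped by the solution of the scalar equation `D_t^α y = -λ i * y`, `y 0 = 1`. -/
noncomputable def mlExpansion (α : ℝ) (lam c : ι → ℝ) (X : ι → ℝ → ℝ) (x t : ℝ) : ℝ :=
  ∑' i, c i * ml α 1 (-lam i * t ^ α) * X i x

lemma mlExpansion_eq_tsum_mul_ml (α : ℝ) (lam c : ι → ℝ) (X : ι → ℝ → ℝ) (x : ℝ) :
    mlExpansion α lam c X x = fun t => ∑' i, c i * X i x * ml α 1 (-lam i * t ^ α) :=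
  funext fun _ => tsum_congr fun _ => mul_right_comm _ _ _

namespace DirichletEigenfamily

variable (hX : DirichletEigenfamily a b p q lam X) {c : ι → ℝ}
  (hc : Summable fun i => (lam i + lam i ^ 3) * c i ^ 2) {α : ℝ} (hα : 0 < α)

include hX

lemma mlExpansion_left (c : ι → ℝ) (α t : ℝ) : mlExpansion α lam c X a t = 0 := by
  simp [mlExpansion, hX.left_eq_zero]

lemma mlExpansion_right (c : ι → ℝ) (α t : ℝ) : mlExpansion α lam c X b t = 0 := by
  simp [mlExpansion, hX.right_eq_zero]

lemma abs_mul_ml_le (c : ι → ℝ) (hα : 0 < α) (hα1 : α ≤ 1) {t : ℝ} (ht : 0 ≤ t) (i : ι) :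
    |c i * ml α 1 (-lam i * t ^ α)| ≤ |c i| := by
  rw [abs_mul]
  exact mul_le_of_le_one_right (abs_nonneg _) (abs_ml_one_le_one hα hα1
    (mul_nonpos_of_nonpos_of_nonneg (neg_nonpos.2 (hX.pos i).le) (Real.rpow_nonneg ht _)))

include hc hα

lemma hasSum_mlExpansion_zero {x : ℝ} (hx : x ∈ Icc a b) :
    HasSum (fun i => c i * X i x) (mlExpansion α lam c X x 0) := by
  simpa [mlExpansion, Real.zero_rpow hα.ne', ml_zero] using (hX.summable_mul hc hx).hasSum

lemma hasSumUniformlyOn_mlExpansion (hα1 : α ≤ 1) :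
    HasSumUniformlyOn (fun i (z : ℝ × ℝ) => c i * ml α 1 (-lam i * z.2 ^ α) * X i z.1)
      (fun z => mlExpansion α lam c X z.1 z.2) (Icc a b ×ˢ Ici 0) :=
  (hX.summableUniformlyOn_mul (fun _ hz => hz.1) hc
    fun i _ hz => hX.abs_mul_ml_le c hα hα1 hz.2 i).hasSumUniformlyOn

lemma continuousOn_mlExpansion (hα1 : α ≤ 1) :
    ContinuousOn (fun z : ℝ × ℝ => mlExpansion α lam c X z.1 z.2) (Icc a b ×ˢ Ici 0) :=
  continuousOn_tsum_of_summableUniformlyOn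
    (fun i => (continuous_const.mul
      ((continuous_ml_mul_rpow hα one_pos _).comp continuous_snd)).continuousOn.mul
      ((hX.continuousOn i).comp continuousOn_fst fun _ hz => hz.1))
    (hX.hasSumUniformlyOn_mlExpansion hc hα hα1).summableUniformlyOn

lemma contDiffOn_mlExpansion (hα1 : α ≤ 1) {t : ℝ} (ht : 0 ≤ t) :
    ContDiffOn ℝ 2 (fun x => mlExpansion α lam c X x t) (Ioo a b) :=
  hX.contDiffOn_tsum_mul
    (hX.summable_weight_mul_sq_of_abs_le hc (hX.abs_mul_ml_le c hα hα1 ht))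

lemma deriv_deriv_mlExpansion (hα1 : α ≤ 1) {t : ℝ} (ht : 0 ≤ t) {x : ℝ} (hx : x ∈ Ioo a b) :
    deriv (deriv fun y => mlExpansion α lam c X y t) x
      = ∑' i, c i * ml α 1 (-lam i * t ^ α) * deriv (deriv (X i)) x :=
  (hX.hasDerivAt_deriv_tsum_mul
    (hX.summable_weight_mul_sq_of_abs_le hc (hX.abs_mul_ml_le c hα hα1 ht)) hx).deriv

lemma deriv_mul_deriv_mlExpansion_sub (hα1 : α ≤ 1) {t : ℝ} (ht : 0 ≤ t) {x : ℝ}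
    (hx : x ∈ Ioo a b) :
    deriv (fun y => p y * deriv (fun z => mlExpansion α lam c X z t) y) x
        - q x * mlExpansion α lam c X x t
      = -∑' i, c i * lam i * ml α 1 (-lam i * t ^ α) * X i x := by
  refine (hX.deriv_mul_deriv_tsum_mul_sub
    (hX.summable_weight_mul_sq_of_abs_le hc (hX.abs_mul_ml_le c hα hα1 ht)) hx).trans ?_
  congr! 3 with i
  ring

lemma intervalIntegrable_sub_rpow_mul_deriv_mlExpansion (hα1 : α < 1) {x : ℝ} (hx : x ∈ Icc a b)
    {t : ℝ} (ht : 0 < t) :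
    IntervalIntegrable (fun s => (t - s) ^ (-α) * deriv (mlExpansion α lam c X x) s)
      volume 0 t := by
  rw [mlExpansion_eq_tsum_mul_ml]
  exact intervalIntegrable_sub_rpow_mul_deriv_tsum_ml hα hα1 (fun i => neg_nonpos.2 (hX.pos i).le)
    (hX.summable_mul hc hx)
    ((hX.summable_mul_lam_mul hc hx).neg.congr fun i => (mul_neg _ _).symm) ht

lemma caputo_mlExpansion [Countable ι] (hα1 : α < 1) {x : ℝ} (hx : x ∈ Icc a b) {t : ℝ}
    (ht : 0 < t) :
    caputo α (mlExpansion α lam c X x) t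
      = -∑' i, c i * lam i * ml α 1 (-lam i * t ^ α) * X i x := by
  rw [mlExpansion_eq_tsum_mul_ml, caputo_tsum_ml hα hα1 (fun i => neg_nonpos.2 (hX.pos i).le)
    (hX.summable_mul hc hx)
    ((hX.summable_mul_lam_mul hc hx).neg.congr fun i => (mul_neg _ _).symm) ht, ← tsum_neg]
  exact tsum_congr fun i => by ring

end DirichletEigenfamily

end MittagLefflerExpansion

end EigenfunctionExpansion

namespace SturmLiouvilleData

variable {l : ℝ} {p q : ℝ → ℝ} {lam : ℕ → ℝ} {X : ℕ → ℝ → ℝ}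
  (hSL : SturmLiouvilleData l p q lam X)

include hSL

lemma dirichletEigenfamily : DirichletEigenfamily 0 l p q lam X where
  differentiableOn_coeff := (hSL.hp.differentiableOn one_ne_zero).mono Ioo_subset_Icc_self
  pos := hSL.hlam
  continuousOn i := (hSL.hX i).continuousOn
  contDiffOn i := (hSL.hX i).mono Ioo_subset_Icc_self
  eigen := hSL.heig
  left_eq_zero := hSL.hbc0
  right_eq_zero := hSL.hbcl
  summable_sq := by
    obtain ⟨g, hg⟩ := hSL.hser1
    exact summableUniformlyOn_of_tendstoUniformlyOn_range
      (fun i x _ => div_nonneg (sq_nonneg _) (hSL.hlam i).le) hg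
  summable_deriv_sq := by
    obtain ⟨g, hg⟩ := hSL.hser2
    exact summableUniformlyOn_of_tendstoUniformlyOn_range
      (fun i x _ => by positivity) (hg.mono Ioo_subset_Icc_self)
  summable_deriv_deriv_sq := by
    obtain ⟨g, hg⟩ := hSL.hser3
    exact summableUniformlyOn_of_tendstoUniformlyOn_range
      (fun i x _ => div_nonneg (sq_nonneg _) (pow_nonneg (hSL.hlam i).le 3))
      (hg.mono Ioo_subset_Icc_self)

lemma summable_weight_mul_sq {c : ℕ → ℝ} (hc : Summable fun i => lam i ^ 4 * c i ^ 2) :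
    Summable fun i => (lam i + lam i ^ 3) * c i ^ 2 := by
  refine (hc.mul_left 2).of_norm_bounded_eventually_nat ?_
  filter_upwards [hSL.hlamtop.eventually_ge_atTop 1] with i hi
  have := hSL.hlam i
  rw [Real.norm_of_nonneg (by positivity), ← mul_assoc]
  gcongr
  linarith [le_self_pow₀ hi four_ne_zero, pow_le_pow_right₀ hi (show 3 ≤ 4 by norm_num)]

end SturmLiouvilleData

theorem classical_solvability_1d_general {ι : Type*} [Countable ι] {α a b : ℝ} (hα : 0 < α)
    (hα1 : α < 1) {p q : ℝ → ℝ} {lam : ι → ℝ} {X : ι → ℝ → ℝ}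
    (hX : DirichletEigenfamily a b p q lam X) {c : ι → ℝ}
    (hc : Summable fun i => (lam i + lam i ^ 3) * c i ^ 2) :
    let u := mlExpansion α lam c X
    HasSumUniformlyOn (fun i (z : ℝ × ℝ) => c i * ml α 1 (-lam i * z.2 ^ α) * X i z.1)
      (fun z => u z.1 z.2) (Icc a b ×ˢ Ici 0) ∧
    ContinuousOn (fun z : ℝ × ℝ => u z.1 z.2) (Icc a b ×ˢ Ici 0) ∧
    (∀ x ∈ Icc a b, HasSum (fun i => c i * X i x) (u x 0)) ∧
    (∀ t, u a t = 0 ∧ u b t = 0) ∧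
    (∀ t, 0 ≤ t → ContDiffOn ℝ 2 (fun x => u x t) (Ioo a b) ∧
      ∀ x ∈ Ioo a b, deriv (deriv fun y => u y t) x
        = ∑' i, c i * ml α 1 (-lam i * t ^ α) * deriv (deriv (X i)) x) ∧
    (∀ x ∈ Icc a b, ∀ t, 0 < t →
      IntervalIntegrable (fun s => (t - s) ^ (-α) * deriv (u x) s) volume 0 t ∧
      caputo α (u x) t = -∑' i, c i * lam i * ml α 1 (-lam i * t ^ α) * X i x) ∧
    (∀ x ∈ Ioo a b, ∀ t, 0 < t →
      caputo α (u x) t = deriv (fun y => p y * deriv (fun z => u z t) y) x - q x * u x t) :=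
  ⟨hX.hasSumUniformlyOn_mlExpansion hc hα hα1.le,
    hX.continuousOn_mlExpansion hc hα hα1.le,
    fun _ hx => hX.hasSum_mlExpansion_zero hc hα hx,
    fun t => ⟨hX.mlExpansion_left c α t, hX.mlExpansion_right c α t⟩,
    fun _ ht => ⟨hX.contDiffOn_mlExpansion hc hα hα1.le ht,
      fun _ hx => hX.deriv_deriv_mlExpansion hc hα hα1.le ht hx⟩,
    fun _ hx _ ht => ⟨hX.intervalIntegrable_sub_rpow_mul_deriv_mlExpansion hc hα hα1 hx ht,
      hX.caputo_mlExpansion hc hα hα1 hx ht⟩,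
    fun _ hx _ ht => (hX.caputo_mlExpansion hc hα hα1 (Ioo_subset_Icc_self hx) ht).trans
      (hX.deriv_mul_deriv_mlExpansion_sub hc hα hα1.le ht.le hx).symm⟩

/-- classical solvability in 1D, Theorem 5: with Sturm–Liouville
eigendata `(λ_i, X_i)` on `[0,l]`, coefficients `(c_i)` with `∑ λ_i⁴ c_i² < ∞` and
`u₀ = ∑ c_i X_i` converging uniformly on `[0,l]`, the series
`u(x,t) = ∑ c_i E_α(−λ_i t^α) X_i(x)` converges uniformly on `[0,l]×[0,T]` to a
continuous function satisfying the initial condition, the zero Dirichlet boundary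
conditions, the stated spatial and Caputo time differentiability with the
term-by-term formulas, and the one-dimensional time-fractional diffusion equation. -/
theorem classical_solvability_1d (α T l : ℝ) (hα : 0 < α) (hα1 : α < 1) (hT : 0 < T)
    (p q : ℝ → ℝ) (lam : ℕ → ℝ) (X : ℕ → ℝ → ℝ)
    (hSL : SturmLiouvilleData l p q lam X)
    (c : ℕ → ℝ) (hc : Summable fun i => lam i ^ 4 * c i ^ 2)
    (u₀ : ℝ → ℝ)
    (hu₀ : TendstoUniformlyOn (fun N x => ∑ i ∈ Finset.range N, c i * X i x) u₀
      Filter.atTop (Set.Icc 0 l)) :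
    let u : ℝ → ℝ → ℝ := fun x t => ∑' i, c i * ml α 1 (-lam i * t ^ α) * X i x
    -- the series converges uniformly on [0,l]×[0,T] to u, which is continuous
    (TendstoUniformlyOn
      (fun N (z : ℝ × ℝ) => ∑ i ∈ Finset.range N, c i * ml α 1 (-lam i * z.2 ^ α) * X i z.1)
      (fun z : ℝ × ℝ => u z.1 z.2) Filter.atTop (Set.Icc 0 l ×ˢ Set.Icc 0 T)) ∧
    ContinuousOn (fun z : ℝ × ℝ => u z.1 z.2) (Set.Icc 0 l ×ˢ Set.Icc 0 T) ∧
    -- initial condition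
    (∀ x ∈ Set.Icc (0:ℝ) l, u x 0 = u₀ x) ∧
    -- boundary conditions
    (∀ t ∈ Set.Icc (0:ℝ) T, u 0 t = 0 ∧ u l t = 0) ∧
    -- spatial regularity and term-by-term second derivative
    (∀ t ∈ Set.Ioo (0:ℝ) T, ContDiffOn ℝ 2 (fun x => u x t) (Set.Ioo 0 l) ∧
      ∀ x ∈ Set.Ioo (0:ℝ) l, deriv (deriv (fun y => u y t)) x
        = ∑' i, c i * ml α 1 (-lam i * t ^ α) * deriv (deriv (X i)) x) ∧
    -- existence of the Caputo derivative in time and the term-by-term formula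
    (∀ x ∈ Set.Ioo (0:ℝ) l, ∀ t ∈ Set.Ioo (0:ℝ) T,
      IntervalIntegrable (fun s => (t - s) ^ (-α) * deriv (u x) s)
        MeasureTheory.volume 0 t ∧
      caputo α (u x) t = -∑' i, c i * lam i * ml α 1 (-lam i * t ^ α) * X i x) ∧
    -- the time-fractional diffusion equation
    (∀ x ∈ Set.Ioo (0:ℝ) l, ∀ t ∈ Set.Ioo (0:ℝ) T,
      caputo α (u x) t
        = deriv (fun y => p y * deriv (fun z => u z t) y) x - q x * u x t) := by
  obtain ⟨hunif, hcont, hinit, hbdry, hspace, hcaputo, hpde⟩ :=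
    classical_solvability_1d_general hα hα1 hSL.dirichletEigenfamily (hSL.summable_weight_mul_sq hc)
  have hsub : Icc 0 l ×ˢ Icc 0 T ⊆ Icc 0 l ×ˢ Ici 0 := prod_mono_right Icc_subset_Ici_self
  exact ⟨(hunif.mono hsub).tendstoUniformlyOn_finsetRange, hcont.mono hsub,
    fun x hx => tendsto_nhds_unique (hinit x hx).tendsto_sum_nat (hu₀.tendsto_at hx),
    fun t _ => hbdry t, fun t ht => hspace t ht.1.le,
    fun x hx t ht => hcaputo x (Ioo_subset_Icc_self hx) t ht.1,
    fun x hx t ht => hpde x hx t ht.1⟩
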